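/- Nonnegativity of conditional mutual information (strong subadditivity): for any state ρ on H_A ⊗ H_B ⊗ H_C, I(A:C|B)_ρ := S(AB) + S(BC) − S(B) − S(ABC) ≥ 0. -/

import Mathlib

open scoped ComplexOrder Matrix

/-- The von Neumann entropy `S(A) = −∑ λᵢ log λᵢ` of a Hermitian matrix,
computed from its eigenvalues (junk value `0` for non-Hermitian input). -/
noncomputable def vonNeumannEntropy {n : Type*} [Fintype n] [DecidableEq n]
    (A : Matrix n n ℂ) : ℝ :=
  if h : A.IsHermitian then -∑ i, h.eigenvalues i * Real.log (h.eigenvalues i)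
  else 0

section Tripartite

variable {a b c : Type*} [Fintype a] [DecidableEq a] [Fintype b] [DecidableEq b]
  [Fintype c] [DecidableEq c]

/-- Partial trace over `C`, giving the reduced state on `AB`. -/
noncomputable def ptrC (X : Matrix (a × b × c) (a × b × c) ℂ) :
    Matrix (a × b) (a × b) ℂ :=
  Matrix.of fun p q => ∑ k, X (p.1, p.2, k) (q.1, q.2, k)

/-- Partial trace over `A`, giving the reduced state on `BC`. -/
noncomputable def ptrA (X : Matrix (a × b × c) (a × b × c) ℂ) :
    Matrix (b × c) (b × c) ℂ :=
  Matrix.of fun p q => ∑ i, X (i, p) (i, q)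

/-- Partial trace over `A` and `C`, giving the reduced state on `B`. -/
noncomputable def ptrAC (X : Matrix (a × b × c) (a × b × c) ℂ) :
    Matrix b b ℂ :=
  Matrix.of fun p q => ∑ i, ∑ k, X (i, p, k) (i, q, k)

/-!
For positive definite `ρ` the conditional mutual information is a difference of relative entropies,
`I(A:C|B) = D(ρ_ABC ‖ ρ_AB ⊗ 1) - D(ρ_BC ‖ ρ_B ⊗ 1)`, and the second arises from the first by
tracing out `A`; so strong subadditivity is an instance of the monotonicity of `D` under partial
trace.

In eigenbases of `P` and `Q` one has `D(P‖Q) = ∑ wᵢⱼ pᵢ (log pᵢ - log qⱼ)`, which is the limit as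
`T → ∞` of `∫₀ᵀ ∑ wᵢⱼ pᵢ² / (qⱼ + t pᵢ) dt - (Tr P) log (1 + T)`. The integrand equals `Tr X†P` for
the solution `X` of the Sylvester equation `XQ + tPX = P`, and this is the maximum over `Z` of
`2 Re Tr Z†P - Tr Z†(ZQ + tPZ)`. Restricting `Z` to matrices `M ⊗ 1` turns this functional into the
one for the partial traces of `P` and `Q`, whose maximum is therefore at most as large. Positive
semidefinite `ρ` are limits of the positive definite `ρ + ε 1`.
-/

section Scalar

open Filter Topology

theorem tendsto_log_add_mul_sub_log_one_add {p : ℝ} (hp : 0 < p) (q : ℝ) :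
    Tendsto (fun t : ℝ => Real.log (q + t * p) - Real.log (1 + t)) atTop (𝓝 (Real.log p)) := by
  have h_num : Tendsto (fun t : ℝ => q / t + p) atTop (𝓝 p) := by
    simpa using (tendsto_const_nhds.div_atTop tendsto_id).add_const p
  have h_den : Tendsto (fun t : ℝ => 1 / t + 1) atTop (𝓝 1) := by
    simpa using (tendsto_inv_atTop_zero (𝕜 := ℝ)).add_const 1
  have h_ratio : Tendsto (fun t : ℝ => (q / t + p) / (1 / t + 1)) atTop (𝓝 p) := by
    simpa only [div_one, Pi.div_def] using h_num.div h_den one_ne_zero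
  refine (h_ratio.log hp.ne').congr' ?_
  filter_upwards [eventually_gt_atTop 0, eventually_gt_atTop (-q / p)] with t ht htq
  have h_pos : 0 < q + t * p := by linarith [(div_lt_iff₀ hp).1 htq]
  rw [← Real.log_div h_pos.ne' (by positivity)]
  congr 1
  field_simp

theorem tendsto_sum_mul_log_add_mul_sub {ι : Type*} [Fintype ι] (w : ι → ℝ) {p : ι → ℝ}
    (q : ι → ℝ) (hp : ∀ i, 0 < p i) :
    Tendsto (fun t : ℝ => ∑ i, w i * (p i * Real.log (q i + t * p i)) -
        (∑ i, w i * p i) * Real.log (1 + t))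
      atTop (𝓝 (∑ i, w i * (p i * Real.log (p i)))) := by
  refine (tendsto_finsetSum Finset.univ fun i _ =>
    ((tendsto_log_add_mul_sub_log_one_add (hp i) (q i)).const_mul (p i)).const_mul (w i)).congr
      fun t => ?_
  simp only [mul_sub, Finset.sum_sub_distrib, Finset.sum_mul, mul_assoc]

theorem hasDerivAt_sum_mul_log_add_mul {ι : Type*} [Fintype ι] (w : ι → ℝ) {p q : ι → ℝ}
    (hp : ∀ i, 0 < p i) (hq : ∀ i, 0 < q i) {t : ℝ} (ht : 0 ≤ t) :
    HasDerivAt (fun s => ∑ i, w i * (p i * Real.log (q i + s * p i)))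
      (∑ i, w i * (p i ^ 2 / (q i + t * p i))) t := by
  refine HasDerivAt.fun_sum fun i _ => ?_
  have h_pos : 0 < q i + t * p i := add_pos_of_pos_of_nonneg (hq i) (mul_nonneg ht (hp i).le)
  have h_affine : HasDerivAt (fun s => q i + s * p i) (p i) t := by
    simpa using ((hasDerivAt_id t).mul_const (p i)).const_add (q i)
  rw [sq, mul_div_assoc]
  exact ((h_affine.log h_pos.ne').const_mul (p i)).const_mul (w i)

theorem sum_mul_log_sub_log_le_of_sum_div_le {ι κ : Type*} [Fintype ι] [Fintype κ]
    {w p q : ι → ℝ} {w' p' q' : κ → ℝ}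
    (hp : ∀ i, 0 < p i) (hq : ∀ i, 0 < q i) (hp' : ∀ i, 0 < p' i) (hq' : ∀ i, 0 < q' i)
    (h_mass : ∑ i, w' i * p' i = ∑ i, w i * p i)
    (h : ∀ t : ℝ, 0 < t →
      ∑ i, w' i * (p' i ^ 2 / (q' i + t * p' i)) ≤ ∑ i, w i * (p i ^ 2 / (q i + t * p i))) :
    ∑ i, w' i * (p' i * (Real.log (p' i) - Real.log (q' i))) ≤
      ∑ i, w i * (p i * (Real.log (p i) - Real.log (q i))) := by
  let g (t : ℝ) : ℝ := ∑ i, w i * (p i * Real.log (q i + t * p i)) -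
    ∑ i, w' i * (p' i * Real.log (q' i + t * p' i))
  have h_deriv (t : ℝ) (ht : 0 ≤ t) : HasDerivAt g _ t :=
    (hasDerivAt_sum_mul_log_add_mul w hp hq ht).sub (hasDerivAt_sum_mul_log_add_mul w' hp' hq' ht)
  have h_mono : MonotoneOn g (Set.Ici 0) := by
    refine monotoneOn_of_hasDerivWithinAt_nonneg (convex_Ici 0)
      (fun t ht => (h_deriv t ht).continuousAt.continuousWithinAt)
      (fun t ht => (h_deriv t (interior_subset ht)).hasDerivWithinAt) fun t ht => ?_
    exact sub_nonneg.2 (h t (by simpa using ht))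
  have h_lim : Tendsto g atTop (𝓝 (∑ i, w i * (p i * Real.log (p i)) -
      ∑ i, w' i * (p' i * Real.log (p' i)))) := by
    refine ((tendsto_sum_mul_log_add_mul_sub w q hp).sub
      (tendsto_sum_mul_log_add_mul_sub w' q' hp')).congr fun t => ?_
    rw [h_mass, sub_sub_sub_cancel_right]
  have h_le : g 0 ≤ _ := ge_of_tendsto h_lim <| (eventually_ge_atTop 0).mono fun t ht =>
    h_mono Set.self_mem_Ici ht ht
  simp only [g, zero_mul, add_zero] at h_le
  simp only [mul_sub, Finset.sum_sub_distrib]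
  linarith

end Scalar

section Spectral

variable {n 𝕜 : Type*} [Fintype n] [DecidableEq n] [RCLike 𝕜] {A B : Matrix n n 𝕜}

/-- The weights `|⟨uᵢ, vⱼ⟩|²` of two Hermitian matrices with orthonormal eigenbases `u` and `v`.
As a function of pairs of indices they carry the Nussbaum–Szkoła distributions, which turn
traces of products into sums over the two spectra. -/
noncomputable def eigenOverlap (hA : A.IsHermitian) (hB : B.IsHermitian) (x : n × n) : ℝ :=
  ‖(star (hA.eigenvectorUnitary : Matrix n n 𝕜) * hB.eigenvectorUnitary) x.1 x.2‖ ^ 2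

theorem trace_conj_diagonal_mul_conj_diagonal (U V : Matrix n n 𝕜) (d e : n → 𝕜) :
    (U * Matrix.diagonal d * star U * (V * Matrix.diagonal e * star V)).trace =
      ∑ x : n × n, (‖(star U * V) x.1 x.2‖ ^ 2 : ℝ) * (d x.1 * e x.2) := by
  let W := star U * V
  have h_cycle : (U * Matrix.diagonal d * star U * (V * Matrix.diagonal e * star V)).trace =
      (Matrix.diagonal d * W * (Matrix.diagonal e * star W)).trace := by
    rw [show star W = star V * U by simp [W], mul_assoc U, mul_assoc U, Matrix.trace_mul_comm]
    simp only [W, mul_assoc]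
  rw [h_cycle, Fintype.sum_prod_type]
  refine Finset.sum_congr rfl fun i _ => ?_
  rw [Matrix.diag_apply, Matrix.mul_apply]
  refine Finset.sum_congr rfl fun j _ => ?_
  rw [Matrix.diagonal_mul, Matrix.diagonal_mul, Matrix.star_apply, RCLike.star_def,
    RCLike.ofReal_pow, ← RCLike.mul_conj]
  ring

theorem trace_cfc (hA : A.IsHermitian) (f : ℝ → ℝ) :
    (cfc f A).trace = ∑ i, (f (hA.eigenvalues i) : 𝕜) := by
  rw [hA.cfc_eq, Matrix.IsHermitian.cfc, Unitary.conjStarAlgAut_apply, Matrix.trace_mul_cycle,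
    Unitary.coe_star_mul_self, one_mul, Matrix.trace_diagonal]
  rfl

theorem re_trace_cfc_mul_cfc (hA : A.IsHermitian) (hB : B.IsHermitian) (f g : ℝ → ℝ) :
    RCLike.re (cfc f A * cfc g B).trace = ∑ x : n × n, eigenOverlap hA hB x *
      (f (hA.eigenvalues x.1) * g (hB.eigenvalues x.2)) := by
  rw [hA.cfc_eq, hB.cfc_eq, Matrix.IsHermitian.cfc, Matrix.IsHermitian.cfc,
    Unitary.conjStarAlgAut_apply, Unitary.conjStarAlgAut_apply,
    trace_conj_diagonal_mul_conj_diagonal, map_sum]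
  refine Finset.sum_congr rfl fun x _ => ?_
  simp only [Function.comp_apply, ← RCLike.ofReal_mul, RCLike.ofReal_re]
  rfl

theorem continuousOn_real_spectrum (A : Matrix n n 𝕜) (f : ℝ → ℝ) :
    ContinuousOn f (spectrum ℝ A) :=
  A.finite_real_spectrum.continuousOn f

theorem exists_sylvester_solution_diagonal (W : Matrix n n 𝕜) {p q : n → ℝ} {t : ℝ}
    (h_pos : ∀ i j, 0 < q j + t * p i) :
    ∃ Y : Matrix n n 𝕜,
      Y * Matrix.diagonal (RCLike.ofReal ∘ q) +
        (t : 𝕜) • (Matrix.diagonal (RCLike.ofReal ∘ p) * Y) =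
          Matrix.diagonal (RCLike.ofReal ∘ p) * W ∧
      RCLike.re (star Y * (Matrix.diagonal (RCLike.ofReal ∘ p) * W)).trace =
        ∑ x : n × n, ‖W x.1 x.2‖ ^ 2 * (p x.1 ^ 2 / (q x.2 + t * p x.1)) := by
  refine ⟨Matrix.of fun i j => W i j * (p i / (q j + t * p i) : ℝ), ?_, ?_⟩
  · ext i j
    have h_ne : (q j + t * p i : 𝕜) ≠ 0 := mod_cast (h_pos i j).ne'
    simp only [Matrix.add_apply, Matrix.smul_apply, Matrix.mul_diagonal, Matrix.diagonal_mul,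
      Matrix.of_apply, Function.comp_apply, smul_eq_mul, RCLike.ofReal_div, RCLike.ofReal_add,
      RCLike.ofReal_mul]
    linear_combination W i j * div_mul_cancel₀ (p i : 𝕜) h_ne
  · rw [Matrix.star_eq_conjTranspose, ← Matrix.star_vec_dotProduct_vec, dotProduct, map_sum,
      ← (Equiv.prodComm n n).sum_comp]
    refine Finset.sum_congr rfl fun x _ => ?_
    simp only [Equiv.prodComm_apply, Prod.swap, Pi.star_apply, Matrix.vec, Matrix.diagonal_mul,
      Matrix.of_apply, Function.comp_apply, star_mul', RCLike.star_def, RCLike.conj_ofReal]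
    rw [← RCLike.ofReal_re (K := 𝕜) (‖W x.1 x.2‖ ^ 2 * _)]
    congr 1
    push_cast
    rw [← RCLike.conj_mul]
    ring

theorem exists_sylvester_solution (hA : A.PosSemidef) (hB : B.PosDef) {t : ℝ} (ht : 0 ≤ t) :
    ∃ X : Matrix n n 𝕜, X * B + (t : 𝕜) • (A * X) = A ∧
      RCLike.re (star X * A).trace = ∑ x : n × n, eigenOverlap hA.isHermitian hB.isHermitian x *
        (hA.isHermitian.eigenvalues x.1 ^ 2 /
          (hB.isHermitian.eigenvalues x.2 + t * hA.isHermitian.eigenvalues x.1)) := by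
  let U : Matrix n n 𝕜 := hA.isHermitian.eigenvectorUnitary.1
  let V : Matrix n n 𝕜 := hB.isHermitian.eigenvectorUnitary.1
  let P : Matrix n n 𝕜 := Matrix.diagonal (RCLike.ofReal ∘ hA.isHermitian.eigenvalues)
  let Q : Matrix n n 𝕜 := Matrix.diagonal (RCLike.ofReal ∘ hB.isHermitian.eigenvalues)
  have hU : star U * U = 1 := Unitary.coe_star_mul_self _
  have hV : star V * V = 1 := Unitary.coe_star_mul_self _
  have hV_self : V * star V = 1 := Unitary.coe_mul_star_self _
  have hA_eq : A = U * P * star U := hA.isHermitian.spectral_theorem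
  have hB_eq : B = V * Q * star V := hB.isHermitian.spectral_theorem
  obtain ⟨Y, hY, hY_trace⟩ := exists_sylvester_solution_diagonal (𝕜 := 𝕜) (star U * V)
    fun i j => add_pos_of_pos_of_nonneg (hB.eigenvalues_pos j)
      (mul_nonneg ht (hA.eigenvalues_nonneg i))
  refine ⟨U * Y * star V, ?_, ?_⟩
  · calc U * Y * star V * B + (t : 𝕜) • (A * (U * Y * star V))
        = U * Y * (star V * V) * Q * star V +
            (t : 𝕜) • (U * P * (star U * U) * Y * star V) := by
          simp only [hA_eq, hB_eq, mul_assoc]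
      _ = U * (Y * Q + (t : 𝕜) • (P * Y)) * star V := by
          simp only [hU, hV, mul_one, mul_add, add_mul, mul_smul_comm, smul_mul_assoc, mul_assoc]
      _ = A := by
          rw [hY, ← mul_assoc, ← mul_assoc, mul_assoc _ V, hV_self, mul_one, ← hA_eq]
  · refine Eq.trans (congrArg _ ?_) hY_trace
    calc (star (U * Y * star V) * A).trace
        = (V * (star Y * (star U * U) * P * star U)).trace := by
          simp only [hA_eq, star_mul, star_star, mul_assoc]
      _ = (star Y * (P * (star U * V))).trace := by
          rw [Matrix.trace_mul_comm, hU, mul_one]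
          simp only [mul_assoc]

end Spectral

section RelativeEntropy

variable {n 𝕜 : Type*} [Fintype n] [DecidableEq n] [RCLike 𝕜] {A B : Matrix n n 𝕜}

/-- Umegaki's quantum relative entropy `D(A‖B) = Tr A (log A - log B)`. It has this meaning for
positive definite `A` and `B`; elsewhere it inherits the junk values of `Real.log` on the spectra
and of `cfc` outside the Hermitian matrices. -/
noncomputable def relEntropy (A B : Matrix n n 𝕜) : ℝ :=
  RCLike.re (A * (cfc Real.log A - cfc Real.log B)).trace

theorem mul_cfc_log (hA : A.IsHermitian) :
    A * cfc Real.log A = cfc (fun x => x * Real.log x) A := by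
  rw [cfc_mul _ _ A (continuousOn_real_spectrum A _) (continuousOn_real_spectrum A _),
    cfc_id' ℝ A hA.isSelfAdjoint]

theorem sum_eigenOverlap_mul_eigenvalues (hA : A.IsHermitian) (hB : B.IsHermitian) :
    ∑ x : n × n, eigenOverlap hA hB x * hA.eigenvalues x.1 = RCLike.re A.trace := by
  have h := re_trace_cfc_mul_cfc hA hB (fun x => x) 1
  rw [cfc_id' ℝ A hA.isSelfAdjoint, cfc_one ℝ B hB.isSelfAdjoint, mul_one] at h
  simpa only [Pi.one_apply, mul_one] using h.symm

theorem relEntropy_eq_sum_eigenOverlap (hA : A.IsHermitian) (hB : B.IsHermitian) :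
    relEntropy A B = ∑ x : n × n, eigenOverlap hA hB x * (hA.eigenvalues x.1 *
      (Real.log (hA.eigenvalues x.1) - Real.log (hB.eigenvalues x.2))) := by
  have h_self := re_trace_cfc_mul_cfc hA hB (fun x => x * Real.log x) 1
  have h_cross := re_trace_cfc_mul_cfc hA hB (fun x => x) Real.log
  rw [cfc_one ℝ B hB.isSelfAdjoint, mul_one, ← mul_cfc_log hA] at h_self
  rw [cfc_id' ℝ A hA.isSelfAdjoint] at h_cross
  rw [relEntropy, mul_sub, Matrix.trace_sub, map_sub, h_self, h_cross, ← Finset.sum_sub_distrib]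
  exact Finset.sum_congr rfl fun x _ => by rw [Pi.one_apply]; ring

end RelativeEntropy

section PartialTrace

variable {n m γ R : Type*} [Fintype γ]

/-- The partial trace over the second factor of a system whose index set is identified with a
product by `e`. -/
def partialTrace [AddCommMonoid R] (e : n ≃ m × γ) (X : Matrix n n R) : Matrix m m R :=
  Matrix.of fun i j => ∑ k, X (e.symm (i, k)) (e.symm (j, k))

theorem trace_partialTrace [AddCommMonoid R] [Fintype n] [Fintype m] (e : n ≃ m × γ)
    (X : Matrix n n R) : (partialTrace e X).trace = X.trace := by
  simp only [Matrix.trace, Matrix.diag, partialTrace, Matrix.of_apply,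
    ← e.symm.sum_comp fun x => X x x, Fintype.sum_prod_type]

theorem isHermitian_partialTrace [AddCommMonoid R] [StarAddMonoid R] (e : n ≃ m × γ)
    {X : Matrix n n R} (hX : X.IsHermitian) : (partialTrace e X).IsHermitian := by
  ext i j
  simp only [partialTrace, Matrix.conjTranspose_apply, Matrix.of_apply, star_sum, hX.apply]

theorem posDef_partialTrace {𝕜 : Type*} [RCLike 𝕜] [Nonempty γ] (e : n ≃ m × γ)
    {X : Matrix n n 𝕜} (hX : X.PosDef) : (partialTrace e X).PosDef := by
  have h_sum : partialTrace e X =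
      ∑ k, X.submatrix (fun i => e.symm (i, k)) (fun i => e.symm (i, k)) := by
    ext i j
    simp only [partialTrace, Matrix.of_apply, Matrix.sum_apply, Matrix.submatrix_apply]
  rw [h_sum]
  refine Matrix.posDef_sum Finset.univ_nonempty fun k _ => hX.submatrix fun i j h => ?_
  exact (Prod.ext_iff.1 (e.symm.injective h)).1

theorem continuous_partialTrace [AddCommMonoid R] [TopologicalSpace R] [ContinuousAdd R]
    (e : n ≃ m × γ) : Continuous (partialTrace e : Matrix n n R → Matrix m m R) := by
  unfold partialTrace
  fun_prop

end PartialTrace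

section Ampliation

open scoped Kronecker

variable {n m γ R : Type*} [Fintype n] [DecidableEq n] [Fintype m] [DecidableEq m]
  [Fintype γ] [DecidableEq γ] [CommRing R] [StarRing R]

/-- The embedding `M ↦ M ⊗ 1` of the observables of a subsystem, transported along an
identification `e` of the index set of the whole system with a product. It is the adjoint of
`partialTrace e` for the trace pairing. -/
def ampliation (e : n ≃ m × γ) : Matrix m m R →⋆ₐ[R] Matrix n n R where
  toFun M := (M ⊗ₖ (1 : Matrix γ γ R)).submatrix e e
  map_one' := by rw [Matrix.one_kronecker_one, Matrix.submatrix_one_equiv]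
  map_mul' M N := by rw [Matrix.submatrix_mul_equiv, ← Matrix.mul_kronecker_mul, one_mul]
  map_zero' := by rw [Matrix.zero_kronecker, Matrix.submatrix_zero]; rfl
  map_add' M N := by rw [Matrix.add_kronecker, Matrix.submatrix_add]; rfl
  commutes' r := by
    simp only [Algebra.algebraMap_eq_smul_one, Matrix.smul_kronecker, Matrix.one_kronecker_one,
      Matrix.submatrix_smul, Pi.smul_apply, Matrix.submatrix_one_equiv]
  map_star' M := by
    simp only [Matrix.star_eq_conjTranspose, Matrix.conjTranspose_submatrix,
      Matrix.conjTranspose_kronecker, Matrix.conjTranspose_one]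

theorem ampliation_apply (e : n ≃ m × γ) (M : Matrix m m R) (x y : n) :
    ampliation e M x y = M (e x).1 (e y).1 * (1 : Matrix γ γ R) (e x).2 (e y).2 := rfl

theorem trace_ampliation_mul (e : n ≃ m × γ) (M : Matrix m m R) (X : Matrix n n R) :
    (ampliation e M * X).trace = (M * partialTrace e X).trace := by
  simp only [Matrix.trace, Matrix.diag, Matrix.mul_apply, ← e.symm.sum_comp,
    Fintype.sum_prod_type, ampliation_apply, Equiv.apply_symm_apply, partialTrace, Matrix.of_apply,
    Matrix.one_apply, mul_ite, mul_one, mul_zero, ite_mul, zero_mul, Finset.sum_ite_eq,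
    Finset.mem_univ, if_true, Finset.mul_sum]
  exact Finset.sum_congr rfl fun i _ => Finset.sum_comm

variable {𝕜 : Type*} [RCLike 𝕜]

theorem posDef_ampliation_partialTrace (e : n ≃ m × γ) {X : Matrix n n 𝕜} (hX : X.PosDef) :
    (ampliation e (partialTrace e X)).PosDef := by
  cases isEmpty_or_nonempty γ
  · have : IsEmpty n := e.isEmpty
    rw [Subsingleton.elim (ampliation e (partialTrace e X)) 1]
    exact Matrix.PosDef.one
  · exact ((posDef_partialTrace e hX).kronecker Matrix.PosDef.one).submatrix e.injective

theorem continuous_ampliation [TopologicalSpace R] [ContinuousMul R] (e : n ≃ m × γ) :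
    Continuous (ampliation e : Matrix m m R → Matrix n n R) := by
  refine continuous_matrix fun x y => ?_
  simp only [ampliation_apply]
  fun_prop

theorem ampliation_cfc (e : n ≃ m × γ) (f : ℝ → ℝ) {M : Matrix m m 𝕜} (hM : M.IsHermitian) :
    ampliation e (cfc f M) = cfc f (ampliation e M) :=
  StarAlgHomClass.map_cfc (ampliation e) f M (continuousOn_real_spectrum M f)
    (continuous_ampliation e) hM.isSelfAdjoint (hM.isSelfAdjoint.map _)

end Ampliation

section Monotonicity

variable {n m γ 𝕜 : Type*} [Fintype n] [Fintype m] [Fintype γ] [RCLike 𝕜] {A B : Matrix n n 𝕜}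

theorem re_trace_star_mul_sylvester_nonneg (hA : A.PosSemidef) (hB : B.PosSemidef) {t : ℝ}
    (ht : 0 ≤ t) (Z : Matrix n n 𝕜) :
    0 ≤ RCLike.re (star Z * (Z * B + (t : 𝕜) • (A * Z))).trace := by
  have h_left : 0 ≤ (Zᴴ * A * Z).trace := (hA.conjTranspose_mul_mul_same Z).trace_nonneg
  have h_right : 0 ≤ (Z * B * Zᴴ).trace := (hB.mul_mul_conjTranspose_same Z).trace_nonneg
  have h_split : (star Z * (Z * B + (t : 𝕜) • (A * Z))).trace =
      (Z * B * Zᴴ).trace + (t : 𝕜) * (Zᴴ * A * Z).trace := by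
    rw [Matrix.star_eq_conjTranspose, mul_add, Matrix.trace_add, Matrix.trace_mul_comm Zᴴ,
      mul_smul_comm, Matrix.trace_smul, smul_eq_mul, mul_assoc Zᴴ]
  rw [h_split, map_add, RCLike.re_ofReal_mul]
  exact add_nonneg (RCLike.nonneg_iff.1 h_right).1
    (mul_nonneg ht (RCLike.nonneg_iff.1 h_left).1)

theorem re_trace_star_mul_sylvester_comm (hA : A.IsHermitian) (hB : B.IsHermitian) (t : ℝ)
    (X Z : Matrix n n 𝕜) :
    RCLike.re (star X * (Z * B + (t : 𝕜) • (A * Z))).trace =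
      RCLike.re (star Z * (X * B + (t : 𝕜) • (A * X))).trace := by
  rw [← RCLike.conj_re (star Z * (X * B + (t : 𝕜) • (A * X))).trace, ← RCLike.star_def,
    ← Matrix.trace_conjTranspose]
  simp only [Matrix.star_eq_conjTranspose, Matrix.conjTranspose_mul, Matrix.conjTranspose_add,
    Matrix.conjTranspose_smul, Matrix.conjTranspose_conjTranspose, hA.eq, hB.eq, RCLike.star_def,
    RCLike.conj_ofReal, mul_add, Matrix.trace_add, mul_smul_comm, mul_assoc]
  rw [← mul_assoc Xᴴ Z B, Matrix.trace_mul_comm (Xᴴ * Z) B]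

theorem two_mul_re_trace_sub_le_re_trace_sylvester (hA : A.PosSemidef) (hB : B.PosSemidef)
    {t : ℝ} (ht : 0 ≤ t) {X : Matrix n n 𝕜} (hX : X * B + (t : 𝕜) • (A * X) = A)
    (Z : Matrix n n 𝕜) :
    2 * RCLike.re (star Z * A).trace -
      RCLike.re (star Z * (Z * B + (t : 𝕜) • (A * Z))).trace ≤
        RCLike.re (star X * A).trace := by
  have h_square := re_trace_star_mul_sylvester_nonneg hA hB ht (Z - X)
  have h_comm := re_trace_star_mul_sylvester_comm hA.isHermitian hB.isHermitian t X Z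
  have h_sylvester : (Z - X) * B + (t : 𝕜) • (A * (Z - X)) =
      Z * B + (t : 𝕜) • (A * Z) - A := by
    nth_rw 3 [← hX]
    simp only [sub_mul, mul_sub, smul_sub]
    abel
  rw [h_sylvester, star_sub, sub_mul, mul_sub, mul_sub] at h_square
  simp only [Matrix.trace_sub, map_sub] at h_square
  rw [hX] at h_comm
  linarith

theorem re_trace_sylvester_partialTrace_le (e : n ≃ m × γ) (hA : A.PosSemidef)
    (hB : B.PosSemidef) {t : ℝ} (ht : 0 ≤ t) {X : Matrix n n 𝕜} {Y : Matrix m m 𝕜}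
    (hX : X * B + (t : 𝕜) • (A * X) = A)
    (hY : Y * partialTrace e B + (t : 𝕜) • (partialTrace e A * Y) = partialTrace e A) :
    RCLike.re (star Y * partialTrace e A).trace ≤ RCLike.re (star X * A).trace := by
  classical
  let Z : Matrix n n 𝕜 := ampliation e Y
  have h_linear : (star Z * A).trace = (star Y * partialTrace e A).trace := by
    rw [← map_star, trace_ampliation_mul]
  have h_quadratic : (star Z * (Z * B + (t : 𝕜) • (A * Z))).trace =
      (star Y * partialTrace e A).trace :=
    calc (star Z * (Z * B + (t : 𝕜) • (A * Z))).trace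
        = (ampliation e (star Y * Y) * B).trace +
            (t : 𝕜) * (ampliation e (Y * star Y) * A).trace := by
          rw [map_mul, map_mul, map_star, mul_add, Matrix.trace_add, mul_smul_comm,
            Matrix.trace_smul, smul_eq_mul, ← mul_assoc, ← mul_assoc, Matrix.trace_mul_comm _ Z,
            mul_assoc Z]
      _ = (star Y * (Y * partialTrace e B + (t : 𝕜) • (partialTrace e A * Y))).trace := by
          rw [trace_ampliation_mul, trace_ampliation_mul, mul_add, Matrix.trace_add,
            mul_smul_comm, Matrix.trace_smul, smul_eq_mul, ← mul_assoc, ← mul_assoc,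
            Matrix.trace_mul_comm _ Y, mul_assoc Y]
      _ = (star Y * partialTrace e A).trace := by rw [hY]
  have h_variational := two_mul_re_trace_sub_le_re_trace_sylvester hA hB ht hX Z
  rw [h_linear, h_quadratic] at h_variational
  linarith

theorem relEntropy_partialTrace_le [DecidableEq n] [DecidableEq m] (e : n ≃ m × γ)
    (hA : A.PosDef) (hB : B.PosDef) :
    relEntropy (partialTrace e A) (partialTrace e B) ≤ relEntropy A B := by
  cases isEmpty_or_nonempty γ
  · have : IsEmpty n := e.isEmpty
    simp [relEntropy, Matrix.trace, partialTrace, Matrix.mul_apply]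
  have hA' := posDef_partialTrace e hA
  have hB' := posDef_partialTrace e hB
  rw [relEntropy_eq_sum_eigenOverlap hA.isHermitian hB.isHermitian,
    relEntropy_eq_sum_eigenOverlap hA'.isHermitian hB'.isHermitian]
  refine sum_mul_log_sub_log_le_of_sum_div_le (fun _ => hA.eigenvalues_pos _)
    (fun _ => hB.eigenvalues_pos _) (fun _ => hA'.eigenvalues_pos _)
    (fun _ => hB'.eigenvalues_pos _) ?_ fun t ht => ?_
  · rw [sum_eigenOverlap_mul_eigenvalues, sum_eigenOverlap_mul_eigenvalues, trace_partialTrace]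
  · obtain ⟨X, hX, hX_trace⟩ := exists_sylvester_solution hA.posSemidef hB ht.le
    obtain ⟨Y, hY, hY_trace⟩ := exists_sylvester_solution hA'.posSemidef hB' ht.le
    rw [← hX_trace, ← hY_trace]
    exact re_trace_sylvester_partialTrace_le e hA.posSemidef hB.posSemidef ht.le hX hY

end Monotonicity

section Entropy

variable {n : Type*} [Fintype n] [DecidableEq n] {A : Matrix n n ℂ}

theorem vonNeumannEntropy_eq_re_trace_cfc (hA : A.IsHermitian) :
    vonNeumannEntropy A = (cfc Real.negMulLog A).trace.re := by
  rw [vonNeumannEntropy, dif_pos hA, trace_cfc hA, Complex.re_sum, ← Finset.sum_neg_distrib]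
  exact Finset.sum_congr rfl fun i _ => (neg_mul _ _).symm

theorem vonNeumannEntropy_eq_neg_re_trace_mul_cfc_log (hA : A.IsHermitian) :
    vonNeumannEntropy A = -(A * cfc Real.log A).trace.re := by
  rw [mul_cfc_log hA, trace_cfc hA, Complex.re_sum, vonNeumannEntropy, dif_pos hA]
  rfl

open scoped Matrix.Norms.L2Operator in
theorem continuousOn_vonNeumannEntropy :
    ContinuousOn (vonNeumannEntropy : Matrix n n ℂ → ℝ) {A | A.IsHermitian} := by
  have h_cfc : ContinuousOn (fun A : Matrix n n ℂ => cfc Real.negMulLog A)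
      {A | A.IsHermitian} :=
    ContinuousOn.cfc_of_mem_nhdsSet (s := Set.univ) Real.negMulLog (by simp) continuousOn_id
      (fun A hA => hA) Real.continuous_negMulLog.continuousOn
  exact (Complex.continuous_re.comp_continuousOn
    (continuous_id.matrix_trace.comp_continuousOn h_cfc)).congr fun A hA =>
      vonNeumannEntropy_eq_re_trace_cfc hA

theorem relEntropy_ampliation_partialTrace {m γ : Type*} [Fintype m] [DecidableEq m] [Fintype γ]
    [DecidableEq γ] (e : n ≃ m × γ) (hA : A.IsHermitian) :
    relEntropy A (ampliation e (partialTrace e A)) =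
      vonNeumannEntropy (partialTrace e A) - vonNeumannEntropy A := by
  have hE := isHermitian_partialTrace e hA
  rw [relEntropy, ← ampliation_cfc e Real.log hE, mul_sub, Matrix.trace_sub,
    Matrix.trace_mul_comm A (ampliation e _), trace_ampliation_mul, Matrix.trace_mul_comm (cfc _ _),
    vonNeumannEntropy_eq_neg_re_trace_mul_cfc_log hE,
    vonNeumannEntropy_eq_neg_re_trace_mul_cfc_log hA, map_sub]
  simp only [RCLike.re_eq_complex_re]
  ring

end Entropy

section StrongSubadditivity

open Filter Topology

theorem ptrC_eq_partialTrace {α β γ : Type*} [Fintype γ]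
    (X : Matrix (α × β × γ) (α × β × γ) ℂ) :
    ptrC X = partialTrace (Equiv.prodAssoc α β γ).symm X := rfl

theorem ptrA_eq_partialTrace {α β γ : Type*} [Fintype α]
    (X : Matrix (α × β × γ) (α × β × γ) ℂ) :
    ptrA X = partialTrace (Equiv.prodComm α (β × γ)) X := rfl

theorem ptrAC_eq_partialTrace_ptrC {α β γ : Type*} [Fintype α] [Fintype γ]
    (X : Matrix (α × β × γ) (α × β × γ) ℂ) :
    ptrAC X = partialTrace (Equiv.prodComm α β) (ptrC X) := rfl

theorem ptrAC_eq_partialTrace_ptrA {α β γ : Type*} [Fintype α] [Fintype γ]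
    (X : Matrix (α × β × γ) (α × β × γ) ℂ) :
    ptrAC X = partialTrace (Equiv.refl (β × γ)) (ptrA X) := by
  ext i j
  exact Finset.sum_comm

theorem ptrA_ampliation (M : Matrix (a × b) (a × b) ℂ) :
    ptrA (ampliation (Equiv.prodAssoc a b c).symm M) =
      ampliation (Equiv.refl (b × c)) (partialTrace (Equiv.prodComm a b) M) := by
  ext i j
  change ∑ k, M (k, i.1) (k, j.1) * (1 : Matrix c c ℂ) i.2 j.2 =
    (∑ k, M (k, i.1) (k, j.1)) * (1 : Matrix c c ℂ) i.2 j.2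
  rw [Finset.sum_mul]

/-- The conditional mutual information `I(A:C|B) = S(AB) + S(BC) - S(B) - S(ABC)`. -/
noncomputable def condMutualInfo (ρ : Matrix (a × b × c) (a × b × c) ℂ) : ℝ :=
  vonNeumannEntropy (ptrC ρ) + vonNeumannEntropy (ptrA ρ)
    - vonNeumannEntropy (ptrAC ρ) - vonNeumannEntropy ρ

theorem condMutualInfo_eq_relEntropy_sub_relEntropy {ρ : Matrix (a × b × c) (a × b × c) ℂ}
    (hρ : ρ.IsHermitian) :
    condMutualInfo ρ = relEntropy ρ (ampliation (Equiv.prodAssoc a b c).symm (ptrC ρ)) -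
      relEntropy (ptrA ρ) (ptrA (ampliation (Equiv.prodAssoc a b c).symm (ptrC ρ))) := by
  have h_ABC := relEntropy_ampliation_partialTrace (Equiv.prodAssoc a b c).symm hρ
  have h_BC := relEntropy_ampliation_partialTrace (Equiv.refl (b × c))
    (isHermitian_partialTrace (Equiv.prodComm a (b × c)) hρ)
  rw [← ptrC_eq_partialTrace] at h_ABC
  rw [← ptrA_eq_partialTrace, ← ptrAC_eq_partialTrace_ptrA] at h_BC
  rw [condMutualInfo, ptrA_ampliation, ← ptrAC_eq_partialTrace_ptrC, h_ABC, h_BC]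
  ring

theorem condMutualInfo_nonneg_of_posDef {ρ : Matrix (a × b × c) (a × b × c) ℂ}
    (hρ : ρ.PosDef) : 0 ≤ condMutualInfo ρ := by
  rw [condMutualInfo_eq_relEntropy_sub_relEntropy hρ.isHermitian]
  exact sub_nonneg.2 <| relEntropy_partialTrace_le (Equiv.prodComm a (b × c)) hρ
    (posDef_ampliation_partialTrace (Equiv.prodAssoc a b c).symm hρ)

theorem continuousOn_vonNeumannEntropy_partialTrace {n m γ : Type*} [Fintype m] [DecidableEq m]
    [Fintype γ] (e : n ≃ m × γ) :
    ContinuousOn (fun A : Matrix n n ℂ => vonNeumannEntropy (partialTrace e A))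
      {A | A.IsHermitian} :=
  continuousOn_vonNeumannEntropy.comp (continuous_partialTrace e).continuousOn
    fun _ => isHermitian_partialTrace e

theorem continuousOn_condMutualInfo :
    ContinuousOn (condMutualInfo : Matrix (a × b × c) (a × b × c) ℂ → ℝ)
      {ρ | ρ.IsHermitian} := by
  have h_C := continuousOn_vonNeumannEntropy_partialTrace (Equiv.prodAssoc a b c).symm
  have h_A := continuousOn_vonNeumannEntropy_partialTrace (Equiv.prodComm a (b × c))
  have h_AC := (continuousOn_vonNeumannEntropy_partialTrace (Equiv.prodComm a b)).comp
    (continuous_partialTrace (Equiv.prodAssoc a b c).symm).continuousOn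
    fun _ => isHermitian_partialTrace _
  unfold condMutualInfo
  simp only [ptrAC_eq_partialTrace_ptrC, ptrA_eq_partialTrace, ptrC_eq_partialTrace]
  exact ((h_C.add h_A).sub h_AC).sub continuousOn_vonNeumannEntropy

theorem conditional_mutual_information_nonneg_general
    (ρ : Matrix (a × b × c) (a × b × c) ℂ) (hρ : ρ.PosSemidef) :
    0 ≤ vonNeumannEntropy (ptrC ρ) + vonNeumannEntropy (ptrA ρ)
      - vonNeumannEntropy (ptrAC ρ) - vonNeumannEntropy ρ := by
  let σ (ε : ℝ) : Matrix (a × b × c) (a × b × c) ℂ := ρ + (ε : ℂ) • 1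
  have hσ_herm (ε : ℝ) : (σ ε).IsHermitian := by
    simp [σ, Matrix.IsHermitian, hρ.isHermitian.eq]
  have hσ_posDef {ε : ℝ} (hε : 0 < ε) : (σ ε).PosDef :=
    Matrix.PosDef.posSemidef_add hρ (Matrix.PosDef.one.smul (by exact_mod_cast hε))
  have hσ_cont : Continuous σ := by fun_prop
  have h_cont : Continuous fun ε => condMutualInfo (σ ε) :=
    continuousOn_condMutualInfo.comp_continuous hσ_cont hσ_herm
  have h_lim : Tendsto (fun ε => condMutualInfo (σ ε)) (𝓝[>] 0) (𝓝 (condMutualInfo (σ 0))) :=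
    (h_cont.tendsto 0).mono_left nhdsWithin_le_nhds
  have h_nonneg : 0 ≤ condMutualInfo (σ 0) :=
    ge_of_tendsto h_lim <| eventually_mem_nhdsWithin.mono fun ε hε =>
      condMutualInfo_nonneg_of_posDef (hσ_posDef hε)
  simpa only [condMutualInfo, σ, Complex.ofReal_zero, zero_smul, add_zero] using h_nonneg

end StrongSubadditivity

/-- Strong subadditivity of von Neumann entropy: the conditional mutual
information `I(A:C|B) = S(AB) + S(BC) − S(B) − S(ABC)` of any tripartite state
is nonnegative. -/
theorem conditional_mutual_information_nonneg
    (ρ : Matrix (a × b × c) (a × b × c) ℂ)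
    (hρ : ρ.PosSemidef) (hρtr : ρ.trace = 1) :
    0 ≤ vonNeumannEntropy (ptrC ρ) + vonNeumannEntropy (ptrA ρ)
      - vonNeumannEntropy (ptrAC ρ) - vonNeumannEntropy ρ :=
  conditional_mutual_information_nonneg_general ρ hρ

end Tripartite
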